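/- arXiv:2603.04776 — 2 statements merged into one kernel-verified Lean document; each statement's English description precedes it below -/
import Mathlib

section
/- For every 1 ≤ i ≤ 6, the map f_i is #-preserving: define f_i* on finite words over A∖{#} by f_i*(∅) = ∅ and f_i*(b₀b₁⋯bₙ) = g_i(b₀,b₁) g_i(b₁,b₂) ⋯ g_i(b_{n−1},bₙ) g_i(bₙ,#). Then f_i* is a length-preserving bijection of (A∖{#})*, and for every finite word w over A∖{#}, the image under f_i of the cylinder [#w#] = {x ∈ A^ℤ : x(0) = #, x(1+k) = w(k) for 0 ≤ k < |w|, x(1+|w|) = #} equals the cylinder [#f_i*(w)#]. -/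
/-!
The map `f i` is an involution. Indeed `g i b c` only ever exchanges the two letters `a i` and
`ta i`, and it does so exactly when the right neighbour `c` is a trigger, meaning that `c` is
`hash` or some `a j` with `j ≠ i` in the same block of three indices. Neither `a i` nor `ta i` is a
trigger, so applying `f i` leaves the set of trigger positions unchanged, and a second application
undoes the first (`g_g`). The word map `fstar i` is an involution for the same reason, because the
letter read after the end of the word is `hash`, which `g i` fixes.

Letterwise, `fstar i w` is `f i` applied to `w` padded with `hash` (`fstar_getD`), so `f i` maps
`cyl w` into `cyl (fstar i w)`. The two involutions turn this inclusion into an equality and make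
`fstar i` a bijection.
-/

/-- The alphabet: 13 symbols, `a i` for `1 ≤ i ≤ 6` are positions `0..5`,
`ta i` (the tilde symbols) are positions `6..11`, and `hash` is position `12`. -/
abbrev A : Type := Fin 13

def a (i : ℕ) : A := if h : 1 ≤ i ∧ i ≤ 6 then ⟨i - 1, by omega⟩ else ⟨0, by omega⟩

def ta (i : ℕ) : A := if h : 1 ≤ i ∧ i ≤ 6 then ⟨i + 5, by omega⟩ else ⟨0, by omega⟩

def hash : A := ⟨12, by omega⟩

/-- The two-sided shift. -/
def shiftZ {B : Type*} (x : ℤ → B) : ℤ → B := fun n => x (n + 1)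

/-- The one-sided shift. -/
def shift1 {B : Type*} (x : ℕ → B) : ℕ → B := fun n => x (n + 1)

open Classical in
/-- The map `g i : A × A → A`. -/
noncomputable def g (i : ℕ) (b c : A) : A :=
  if b = a i ∧ (c = hash ∨ ∃ j : ℕ, (if i ≤ 3 then 1 else 4) ≤ j ∧
      j ≤ (if i ≤ 3 then 3 else 6) ∧ j ≠ i ∧ c = a j) then ta i
  else if b = ta i ∧ (c = hash ∨ ∃ j : ℕ, (if i ≤ 3 then 1 else 4) ≤ j ∧
      j ≤ (if i ≤ 3 then 3 else 6) ∧ j ≠ i ∧ c = a j) then a i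
  else b

/-- The map `f i : A^ℤ → A^ℤ`, `f i x k = g i (x k) (x (k+1))`. -/
noncomputable def f (i : ℕ) : (ℤ → A) → (ℤ → A) := fun x k => g i (x k) (x (k + 1))

/-- A (two-sided) subshift: nonempty, closed and shift-invariant. -/
def IsSubshift {B : Type*} [TopologicalSpace B] (X : Set (ℤ → B)) : Prop :=
  X.Nonempty ∧ IsClosed X ∧ shiftZ '' X = X

/-- The cylinder `[#w#]`. -/
def cyl (w : List A) : Set (ℤ → A) :=
  {x | x 0 = hash ∧ (∀ k : ℕ, k < w.length → x (1 + (k : ℤ)) = w.getD k hash) ∧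
    x (1 + (w.length : ℤ)) = hash}

/-- The word map `f i *` representing `f i`. -/
noncomputable def fstar (i : ℕ) : List A → List A
  | [] => []
  | [b] => [g i b hash]
  | b :: c :: rest => g i b c :: fstar i (c :: rest)

/-- Composition `f_{l₀} ∘ f_{l₁} ∘ ⋯`. -/
noncomputable def fcomp (l : List ℕ) : (ℤ → A) → (ℤ → A) :=
  l.foldr (fun i F => f i ∘ F) id

/-- The binary code word of length 22 associated to each symbol. -/
def rhoWord (s : A) : List Bool :=
  if (s : ℕ) < 6 then
    [true, true, false, true, false, false] ++ List.replicate (2 * (6 - (s : ℕ))) false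
      ++ [true, true] ++ List.replicate (2 * ((s : ℕ) + 1)) false
  else if (s : ℕ) < 12 then
    [true, true, false, true, false, false, true, true]
      ++ List.replicate (2 * (11 - (s : ℕ))) false
      ++ [true, true] ++ List.replicate (2 * ((s : ℕ) - 5)) false
  else List.replicate 10 true ++ [false, true] ++ List.replicate 10 true

/-- `rho s r` is the `r`-th letter of the code word of `s`. -/
def rho (s : A) (r : ℕ) : Bool := (rhoWord s).getD r false

/-- `ρ⁺(x)` : the concatenation `ρ(x 0) ρ(x 1) ρ(x 2) ⋯`. -/
def rhoPlus (x : ℤ → A) : ℕ → Bool := fun n => rho (x ((n / 22 : ℕ) : ℤ)) (n % 22)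

/-- `φ(X) = ⋃_{0 ≤ n < 22} Sⁿ({ρ⁺(x) : x ∈ X})`. -/
def phi (X : Set (ℤ → A)) : Set (ℕ → Bool) :=
  ⋃ n < 22, shift1^[n] '' (rhoPlus '' X)

/-- The right neighbours `c` in whose presence `g i` exchanges `a i` and `ta i`. -/
def Trig (i : ℕ) (c : A) : Prop :=
  c = hash ∨ ∃ j : ℕ, (if i ≤ 3 then 1 else 4) ≤ j ∧
    j ≤ (if i ≤ 3 then 3 else 6) ∧ j ≠ i ∧ c = a j

open Classical in
lemma g_eq (i : ℕ) (b c : A) : g i b c =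
    if b = a i ∧ Trig i c then ta i else if b = ta i ∧ Trig i c then a i else b := by
  unfold g Trig
  congr

lemma a_ne_ta {i j : ℕ} (hi : 1 ≤ i ∧ i ≤ 6) (hj : 1 ≤ j ∧ j ≤ 6) : a j ≠ ta i := by
  simp only [a, ta, hi, hj, and_self, dite_true, ne_eq, Fin.mk.injEq]
  omega

lemma a_ne_hash {i : ℕ} (hi : 1 ≤ i ∧ i ≤ 6) : a i ≠ hash := by
  unfold _root_.hash
  simp only [a, hi, and_self, dite_true, ne_eq, Fin.mk.injEq]
  omega

lemma ta_ne_hash {i : ℕ} (hi : 1 ≤ i ∧ i ≤ 6) : ta i ≠ hash := by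
  unfold _root_.hash
  simp only [ta, hi, and_self, dite_true, ne_eq, Fin.mk.injEq]
  omega

lemma a_inj {i j : ℕ} (hi : 1 ≤ i ∧ i ≤ 6) (hj : 1 ≤ j ∧ j ≤ 6) (h : a i = a j) : i = j := by
  simp only [a, hi, hj, and_self, dite_true, Fin.mk.injEq] at h
  omega

lemma not_trig_a {i : ℕ} (hi : 1 ≤ i ∧ i ≤ 6) : ¬ Trig i (a i) := by
  rintro (h | ⟨j, h1, h2, h3, h4⟩)
  · exact a_ne_hash hi h
  · exact h3 (a_inj hi (by split_ifs at h1 h2 <;> omega) h4).symm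

lemma not_trig_ta {i : ℕ} (hi : 1 ≤ i ∧ i ≤ 6) : ¬ Trig i (ta i) := by
  rintro (h | ⟨j, h1, h2, h3, h4⟩)
  · exact ta_ne_hash hi h
  · exact a_ne_ta hi (by split_ifs at h1 h2 <;> omega) h4.symm

lemma trig_g {i : ℕ} (hi : 1 ≤ i ∧ i ≤ 6) (b c : A) : Trig i (g i b c) ↔ Trig i b := by
  have h1 := not_trig_a hi
  have h2 := not_trig_ta hi
  rw [g_eq]
  split_ifs with h h' <;> simp_all

lemma g_eq_hash {i : ℕ} (hi : 1 ≤ i ∧ i ≤ 6) (b c : A) : g i b c = hash ↔ b = hash := by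
  have h1 := a_ne_hash hi
  have h2 := ta_ne_hash hi
  rw [g_eq]
  split_ifs with h h' <;> simp_all

lemma g_hash {i : ℕ} (hi : 1 ≤ i ∧ i ≤ 6) (c : A) : g i hash c = hash :=
  (g_eq_hash hi _ _).2 rfl

/-- The local form of the involution: the second application sees a neighbour that is a trigger
precisely when the original neighbour was one. -/
lemma g_g {i : ℕ} (hi : 1 ≤ i ∧ i ≤ 6) (b c d : A) : g i (g i b c) (g i c d) = b := by
  have h0 := a_ne_ta hi hi
  rw [g_eq i (g i b c), trig_g hi, g_eq i b c]
  by_cases hc : Trig i c <;> by_cases h1 : b = a i <;> by_cases h2 : b = ta i <;>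
    simp_all [eq_comm]

lemma f_f {i : ℕ} (hi : 1 ≤ i ∧ i ≤ 6) (x : ℤ → A) : f i (f i x) = x :=
  funext fun _ => g_g hi _ _ _

lemma fstar_length (i : ℕ) (w : List A) : (fstar i w).length = w.length := by
  induction w using fstar.induct <;> simp_all [fstar]

lemma fstar_getD {i : ℕ} (hi : 1 ≤ i ∧ i ≤ 6) (w : List A) (k : ℕ) :
    (fstar i w).getD k hash = g i (w.getD k hash) (w.getD (k + 1) hash) := by
  induction w using fstar.induct generalizing k with
  | case1 => simp [fstar, g_hash hi]
  | case2 b => cases k <;> simp [fstar, g_hash hi]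
  | case3 b c rest ih =>
    cases k with
    | zero => simp [fstar]
    | succ k => simpa [fstar] using ih k

lemma fstar_fstar {i : ℕ} (hi : 1 ≤ i ∧ i ≤ 6) (w : List A) : fstar i (fstar i w) = w := by
  refine List.ext_getElem (by simp [fstar_length]) fun k h1 h2 => ?_
  rw [← List.getD_eq_getElem _ hash h1, ← List.getD_eq_getElem _ hash h2]
  simp only [fstar_getD hi, g_g hi]

lemma hash_notMem_fstar {i : ℕ} (hi : 1 ≤ i ∧ i ≤ 6) {w : List A} (hw : hash ∉ w) :
    hash ∉ fstar i w := by
  intro h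
  obtain ⟨k, hk, e⟩ := List.mem_iff_getElem.1 h
  rw [← List.getD_eq_getElem _ hash hk, fstar_getD hi, g_eq_hash hi] at e
  rw [fstar_length] at hk
  rw [List.getD_eq_getElem _ hash hk] at e
  exact hw (e ▸ List.getElem_mem hk)

lemma f_mem_cyl {i : ℕ} (hi : 1 ≤ i ∧ i ≤ 6) {w : List A} {x : ℤ → A} (hx : x ∈ cyl w) :
    f i x ∈ cyl (fstar i w) := by
  obtain ⟨h0, h1, h2⟩ := hx
  -- The last two conditions defining `cyl w` say that `x` agrees with the padded word up to and
  -- including position `w.length`, where `getD` returns its default `hash`.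
  have key : ∀ k : ℕ, k ≤ w.length → x (1 + (k : ℤ)) = w.getD k hash := by
    intro k hk
    rcases hk.lt_or_eq with hk | rfl
    · exact h1 k hk
    · simpa using h2
  refine ⟨?_, fun k hk => ?_, ?_⟩
  · simp [f, h0, g_hash hi]
  · rw [fstar_length] at hk
    rw [fstar_getD hi, ← key k hk.le, ← key (k + 1) hk]
    simp [f, add_assoc]
  · rw [fstar_length]
    simp [f, h2, g_hash hi]

/-- For every `1 ≤ i ≤ 6`, the map `f i` is `#`-preserving: the word map `fstar i`
is a length-preserving bijection of the hash-free finite words, and the image under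
`f i` of every cylinder `[#w#]` is the cylinder `[# (fstar i w) #]`. -/
theorem stmt2 : ∀ i : ℕ, 1 ≤ i → i ≤ 6 →
    (∀ w : List A, hash ∉ w → (fstar i w).length = w.length) ∧
    Set.BijOn (fstar i) {w : List A | hash ∉ w} {w : List A | hash ∉ w} ∧
    (∀ w : List A, hash ∉ w → f i '' cyl w = cyl (fstar i w)) := by
  intro i h1 h6
  have hi : 1 ≤ i ∧ i ≤ 6 := ⟨h1, h6⟩
  refine ⟨fun w _ => fstar_length i w, ⟨fun w hw => hash_notMem_fstar hi hw, ?_, ?_⟩, ?_⟩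
  · exact (Function.LeftInverse.injective (fstar_fstar hi)).injOn
  · exact fun w hw => ⟨fstar i w, hash_notMem_fstar hi hw, fstar_fstar hi w⟩
  · intro w _
    refine Set.Subset.antisymm (Set.image_subset_iff.2 fun x hx => f_mem_cyl hi hx) ?_
    intro y hy
    have hy' := f_mem_cyl hi hy
    rw [fstar_fstar hi] at hy'
    exact ⟨f i y, hy', f_f hi y⟩
end

section
/- Let X ⊆ A^ℤ be a subshift and let v = b₀b₁⋯b_k be a finite word over A. Then v occurs in X (i.e. there exist x ∈ X and i ∈ ℤ with x(i + t) = b_t for all 0 ≤ t ≤ k) if and only if the binary word ρ(b₀)ρ(b₁)⋯ρ(b_k) of length 22(k+1) occurs in φ(X) (i.e. there exist y ∈ φ(X) and j ∈ ℕ with y(j + s) = (ρ(b₀)⋯ρ(b_k))(s) for all 0 ≤ s < 22(k+1)). -/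
lemma length_rhoWord : ∀ s : A, (rhoWord s).length = 22 := by decide

lemma rho_injective : ∀ b c : A, (∀ r < 22, rho b r = rho c r) → b = c := by
  decide +kernel

/-- Every code word other than that of `hash` begins with `110100`. -/
lemma rho_prefix : ∀ b : A, b ≠ hash →
    ∀ r < 6, rho b r = [true, true, false, true, false, false].getD r false := by
  decide +kernel

/-- The word `110100` occurs in `ρ(c)ρ(d)` at no offset `0 < n < 22`. -/
lemma prefix_sync : ∀ c d : A, ∀ n < 22,
    (∀ r < 6, (if n + r < 22 then rho c (n + r) else rho d (n + r - 22)) =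
      [true, true, false, true, false, false].getD r false) → n = 0 := by
  decide +kernel

/-- The word `1011`, which sits at position `9` of the code word of `hash`, occurs in `ρ(c)ρ(d)` at
no offset `9 + n` with `0 < n < 22`. -/
lemma hash_sync : ∀ c d : A, ∀ n < 22,
    (∀ r < 4, (if n + (9 + r) < 22 then rho c (n + (9 + r)) else rho d (n + (9 + r) - 22)) =
      rho hash (9 + r)) → n = 0 := by
  decide +kernel

lemma rho_sync (b c d : A) (n : ℕ) (hn : n < 22)
    (h : ∀ r < 22, (if n + r < 22 then rho c (n + r) else rho d (n + r - 22)) = rho b r) :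
    n = 0 := by
  by_cases hb : b = hash
  · subst hb
    exact hash_sync c d n hn fun r hr => h (9 + r) (by omega)
  · exact prefix_sync c d n hn fun r hr => (h r (by omega)).trans (rho_prefix b hb r hr)

lemma getD_flatten (v : List A) (t r : ℕ) (ht : t < v.length) (hr : r < 22) :
    ((v.map rhoWord).flatten).getD (22 * t + r) false = rho (v.getD t hash) r := by
  induction v generalizing t with
  | nil => simp at ht
  | cons b v ih =>
    rw [List.map_cons, List.flatten_cons]
    cases t with
    | zero =>
      rw [List.getD_append _ _ _ _ (by rw [length_rhoWord]; omega)]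
      simp [rho]
    | succ t =>
      rw [List.getD_append_right _ _ _ _ (by rw [length_rhoWord]; omega), length_rhoWord,
        show 22 * (t + 1) + r - 22 = 22 * t + r by omega, List.getD_cons_succ]
      exact ih t (by simpa using ht)

lemma rhoPlus_block (x : ℤ → A) (q r : ℕ) (hr : r < 22) :
    rhoPlus x (22 * q + r) = rho (x (q : ℤ)) r := by
  unfold rhoPlus
  rw [show (22 * q + r) / 22 = q by omega, show (22 * q + r) % 22 = r by omega]

lemma shift1_iterate {B : Type*} (n : ℕ) (y : ℕ → B) (k : ℕ) :
    shift1^[n] y k = y (n + k) := by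
  induction n generalizing k with
  | zero => simp
  | succ n ih =>
    rw [Function.iterate_succ_apply', shift1, ih]
    congr 1
    omega

lemma translate_mem {X : Set (ℤ → A)} (hX : shiftZ '' X = X) {x : ℤ → A} (hx : x ∈ X) (n : ℤ) :
    (fun k => x (n + k)) ∈ X := by
  induction n using Int.induction_on with
  | zero => simpa using hx
  | succ n ih =>
    rw [← hX]
    refine ⟨_, ih, ?_⟩
    funext k
    simp only [shiftZ]
    congr 1
    ring
  | pred n ih =>
    rw [← hX] at ih
    obtain ⟨z, hz, hzx⟩ := ih
    convert hz using 1
    funext k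
    have h := congrFun hzx (k - 1)
    simp only [shiftZ, sub_add_cancel] at h
    rw [h]
    congr 1
    ring

/-- An occurrence of a code word in `rhoPlus x` starts at a multiple of `22`. -/
lemma dvd_of_occurs (x : ℤ → A) (b : A) (m : ℕ)
    (h : ∀ r < 22, rhoPlus x (m + r) = rho b r) : 22 ∣ m := by
  refine Nat.dvd_of_mod_eq_zero
    (rho_sync b (x ((m / 22 : ℕ) : ℤ)) (x ((m / 22 + 1 : ℕ) : ℤ)) (m % 22)
      (Nat.mod_lt _ (by omega)) fun r hr => ?_)
  rw [← h r hr]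
  split_ifs with hlt
  · rw [← rhoPlus_block x _ _ hlt]
    congr 1
    omega
  · rw [← rhoPlus_block x _ _ (by omega)]
    congr 1
    omega

/-- A nonempty word `v` over `A` occurs in a subshift `X` iff the binary word
`ρ(v 0) ⋯ ρ(v k)` occurs in `φ(X)`. -/
theorem stmt19 (X : Set (ℤ → A)) (hX : IsSubshift X) (v : List A) (hv : v ≠ []) :
    (∃ x ∈ X, ∃ i : ℤ, ∀ t : ℕ, t < v.length → x (i + (t : ℤ)) = v.getD t hash) ↔
    (∃ y ∈ phi X, ∃ j : ℕ, ∀ s : ℕ, s < 22 * v.length →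
      y (j + s) = ((v.map rhoWord).flatten).getD s false) := by
  constructor
  · rintro ⟨x, hx, i, h⟩
    refine ⟨rhoPlus fun k => x (i + k), ?_, 0, fun s hs => ?_⟩
    · simp only [phi, Set.mem_iUnion]
      exact ⟨0, by omega, _, ⟨_, translate_mem hX.2.2 hx i, rfl⟩, rfl⟩
    · have ht : s / 22 < v.length := by omega
      have hr : s % 22 < 22 := Nat.mod_lt _ (by omega)
      rw [zero_add, ← Nat.div_add_mod s 22, getD_flatten v _ _ ht hr, rhoPlus_block _ _ _ hr,
        h _ ht]
  · rintro ⟨y, hy, j, h⟩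
    simp only [phi, Set.mem_iUnion] at hy
    obtain ⟨n, -, -, ⟨x, hx, rfl⟩, rfl⟩ := hy
    have hblock : ∀ t < v.length, ∀ r < 22,
        rhoPlus x (n + j + 22 * t + r) = rho (v.getD t hash) r := by
      intro t ht r hr
      rw [← getD_flatten v t r ht hr, ← h _ (by omega), shift1_iterate]
      congr 1
      omega
    obtain ⟨q, hq⟩ := dvd_of_occurs x _ (n + j)
      (hblock 0 (List.length_pos_iff.mpr hv))
    refine ⟨x, hx, q, fun t ht => rho_injective _ _ fun r hr => ?_⟩
    rw [← hblock t ht r hr, ← Nat.cast_add, ← rhoPlus_block x _ _ hr, hq, Nat.mul_add]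
end
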